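/- For each n ≥ 1, let (X_n, M_n) be a random element of the space C([0,∞), ℝ^k) × C([0,∞), ℝ) of continuous paths, equipped with the topology of uniform convergence on compact intervals, such that M_n is a martingale with respect to the filtration (F_{n,t})_{t≥0} generated by (X_n, M_n), i.e., F_{n,t} = σ(X_n(s), M_n(s) : 0 ≤ s ≤ t). Suppose (X_n, M_n) ⇒ (X, M), i.e., the laws converge weakly on C([0,∞), ℝ^{k+1}), and suppose that for each t ≥ 0 the family {M_n(t) : n ≥ 1} is uniformly integrable. Then M is a martingale with respect to the filtration generated by (X, M). -/

import Mathlib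

open MeasureTheory Filter Topology Set
open scoped ENNReal NNReal

/-- Truncation of a real number at level `K`. -/
def truncAt (K x : ℝ) : ℝ := max (-K) (min x K)

lemma truncAt_continuous (K : ℝ) : Continuous (truncAt K) := by
  unfold truncAt; fun_prop

lemma abs_truncAt_le {K : ℝ} (hK : 0 ≤ K) (x : ℝ) : |truncAt K x| ≤ K := by
  unfold truncAt
  rw [abs_le]
  exact ⟨le_max_left _ _, max_le (by linarith) (min_le_right _ _)⟩

lemma truncAt_eq {K x : ℝ} (h : |x| ≤ K) : truncAt K x = x := by
  unfold truncAt
  rw [abs_le] at h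
  rw [min_eq_left h.2, max_eq_right h.1]

lemma abs_truncAt_le_abs {K : ℝ} (hK : 0 ≤ K) (x : ℝ) : |truncAt K x| ≤ |x| := by
  rcases le_total |x| K with h | h
  · rw [truncAt_eq h]
  · exact (abs_truncAt_le hK x).trans h

lemma abs_sub_truncAt_le {K : ℝ} (hK : 0 ≤ K) (x : ℝ) : |x - truncAt K x| ≤ |x| := by
  unfold truncAt
  rcases le_total 0 x with h | h
  · rw [max_eq_right (by have := le_min h hK; linarith), abs_of_nonneg h, abs_of_nonneg
      (by linarith [min_le_left x K])]
    linarith [le_min h hK]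
  · rw [min_eq_left (by linarith), abs_of_nonpos h, abs_of_nonpos
      (by linarith [le_max_right (-K) x])]
    have : max (-K) x ≤ 0 := max_le (by linarith) h
    linarith

/-- Uniform truncation error. -/
lemma trunc_error {Ω : Type*} [MeasurableSpace Ω] (P : Measure Ω) [IsProbabilityMeasure P]
    (Y G : Ω → ℝ) (hY : Measurable Y) (hYi : Integrable Y P) (hG : Measurable G)
    (C : ℝ) (hC : 0 ≤ C) (hGC : ∀ ω, |G ω| ≤ C) (c K ε : ℝ) (hK : 0 ≤ K) (hcK : c ≤ K)
    (h : ∫ ω in {ω | c ≤ |Y ω|}, |Y ω| ∂P ≤ ε) :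
    |∫ ω, G ω * Y ω ∂P - ∫ ω, G ω * truncAt K (Y ω) ∂P| ≤ C * ε := by
  have hT : Measurable (fun ω => truncAt K (Y ω)) := (truncAt_continuous K).measurable.comp hY
  have hTi : Integrable (fun ω => truncAt K (Y ω)) P :=
    hYi.mono hT.aestronglyMeasurable (ae_of_all _ fun ω => abs_truncAt_le_abs hK _)
  have i1 : Integrable (fun ω => G ω * Y ω) P :=
    hYi.bdd_mul hG.aestronglyMeasurable (ae_of_all _ hGC)
  have i2 : Integrable (fun ω => G ω * truncAt K (Y ω)) P :=
    hTi.bdd_mul hG.aestronglyMeasurable (ae_of_all _ hGC)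
  have hS : MeasurableSet {ω | c ≤ |Y ω|} := measurableSet_le measurable_const hY.abs
  rw [← integral_sub i1 i2]
  calc |∫ ω, (G ω * Y ω - G ω * truncAt K (Y ω)) ∂P|
      ≤ ∫ ω, C * ({ω | c ≤ |Y ω|}.indicator (fun ω => |Y ω|) ω) ∂P := by
        rw [← Real.norm_eq_abs]
        refine norm_integral_le_of_norm_le ((hYi.abs.indicator hS).const_mul C)
          (ae_of_all _ fun ω => ?_)
        rw [← mul_sub, norm_mul]
        refine mul_le_mul (hGC ω) ?_ (norm_nonneg _) hC
        by_cases hω : c ≤ |Y ω|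
        · rw [indicator_of_mem (by exact hω)]
          exact abs_sub_truncAt_le hK _
        · rw [indicator_of_notMem (by exact hω), truncAt_eq (by linarith)]
          simp
    _ = C * ∫ ω in {ω | c ≤ |Y ω|}, |Y ω| ∂P := by
        rw [integral_const_mul, integral_indicator hS]
    _ ≤ C * ε := mul_le_mul_of_nonneg_left h hC

lemma tendsto_of_trunc
    (Ω : ℕ → Type*) [∀ n, MeasurableSpace (Ω n)]
    (P : ∀ n, Measure (Ω n)) [∀ n, IsProbabilityMeasure (P n)]
    {Ω₀ : Type*} [MeasurableSpace Ω₀] (P₀ : Measure Ω₀) [IsProbabilityMeasure P₀]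
    (Y G : ∀ n, Ω n → ℝ) (Y₀ G₀ : Ω₀ → ℝ)
    (hY : ∀ n, Measurable (Y n)) (hYi : ∀ n, Integrable (Y n) (P n))
    (hG : ∀ n, Measurable (G n))
    (hY₀ : Measurable Y₀) (hYi₀ : Integrable Y₀ P₀) (hG₀ : Measurable G₀)
    (C : ℝ) (hC : 0 ≤ C) (hGC : ∀ n ω, |G n ω| ≤ C) (hGC₀ : ∀ ω, |G₀ ω| ≤ C)
    (hUI : ∀ ε : ℝ, 0 < ε → ∃ c : ℝ, ∀ n,
      ∫ ω in {ω | c ≤ |Y n ω|}, |Y n ω| ∂(P n) ≤ ε)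
    (hlim : ∀ K : ℝ, 0 ≤ K → Tendsto (fun n => ∫ ω, G n ω * truncAt K (Y n ω) ∂(P n)) atTop
      (𝓝 (∫ ω, G₀ ω * truncAt K (Y₀ ω) ∂P₀))) :
    Tendsto (fun n => ∫ ω, G n ω * Y n ω ∂(P n)) atTop (𝓝 (∫ ω, G₀ ω * Y₀ ω ∂P₀)) := by
  have hdct : Tendsto (fun m : ℕ => ∫ ω, G₀ ω * truncAt (m : ℝ) (Y₀ ω) ∂P₀) atTop
      (𝓝 (∫ ω, G₀ ω * Y₀ ω ∂P₀)) := by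
    refine tendsto_integral_of_dominated_convergence (fun ω => C * |Y₀ ω|) ?_ ?_ ?_ ?_
    · intro m
      exact (hG₀.mul ((truncAt_continuous _).measurable.comp hY₀)).aestronglyMeasurable
    · exact hYi₀.abs.const_mul C
    · intro m
      refine ae_of_all _ fun ω => ?_
      rw [norm_mul]
      exact mul_le_mul (hGC₀ ω) (abs_truncAt_le_abs (Nat.cast_nonneg m) _) (norm_nonneg _) hC
    · refine ae_of_all _ fun ω => ?_
      refine tendsto_const_nhds.congr' ?_
      obtain ⟨N, hN⟩ := exists_nat_ge |Y₀ ω|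
      filter_upwards [eventually_ge_atTop N] with m hm
      rw [truncAt_eq (hN.trans (by exact_mod_cast hm))]
  rw [Metric.tendsto_atTop]
  intro ε hε
  obtain ⟨c, hc⟩ := hUI (ε / (3 * (C + 1))) (by positivity)
  have hCε : C * (ε / (3 * (C + 1))) ≤ ε / 3 := by
    have : C / (C + 1) ≤ 1 := by rw [div_le_one (by positivity)]; linarith
    calc C * (ε / (3 * (C + 1))) = (C / (C + 1)) * (ε / 3) := by field_simp
      _ ≤ 1 * (ε / 3) := by gcongr
      _ = ε / 3 := one_mul _
  obtain ⟨m₁, hm₁⟩ := Metric.tendsto_atTop.1 hdct (ε / 3) (by positivity)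
  obtain ⟨m₂, hm₂⟩ := exists_nat_ge c
  set m := max m₁ m₂
  have hd := hm₁ m (le_max_left _ _)
  have hcm : c ≤ (m : ℝ) := hm₂.trans (by exact_mod_cast le_max_right _ _)
  obtain ⟨N, hN⟩ := Metric.tendsto_atTop.1 (hlim m (Nat.cast_nonneg m)) (ε / 3) (by positivity)
  refine ⟨N, fun n hn => ?_⟩
  have h1 := (trunc_error (P n) (Y n) (G n) (hY n) (hYi n) (hG n) C hC (hGC n) c m _
    (Nat.cast_nonneg m) hcm (hc n)).trans hCε
  have h2 := hN n hn
  rw [Real.dist_eq] at *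
  rw [abs_lt] at *
  rw [abs_le] at h1
  constructor <;> linarith [h1.1, h1.2, h2.1, h2.2, hd.1, hd.2]

lemma integrable_limit
    (Ω : ℕ → Type*) [∀ n, MeasurableSpace (Ω n)]
    (P : ∀ n, Measure (Ω n)) [∀ n, IsProbabilityMeasure (P n)]
    {Ω₀ : Type*} [MeasurableSpace Ω₀] (P₀ : Measure Ω₀) [IsProbabilityMeasure P₀]
    (Y : ∀ n, Ω n → ℝ) (Y₀ : Ω₀ → ℝ)
    (hY : ∀ n, Measurable (Y n)) (hYi : ∀ n, Integrable (Y n) (P n))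
    (hY₀ : Measurable Y₀)
    (hUI : ∀ ε : ℝ, 0 < ε → ∃ c : ℝ, ∀ n,
      ∫ ω in {ω | c ≤ |Y n ω|}, |Y n ω| ∂(P n) ≤ ε)
    (hlim : ∀ K : ℝ, 0 ≤ K → Tendsto (fun n => ∫ ω, |truncAt K (Y n ω)| ∂(P n)) atTop
      (𝓝 (∫ ω, |truncAt K (Y₀ ω)| ∂P₀))) :
    Integrable Y₀ P₀ := by
  obtain ⟨c, hc⟩ := hUI 1 one_pos
  have hb : ∀ n, ∫ ω, |Y n ω| ∂(P n) ≤ 1 + |c| := by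
    intro n
    have hS : MeasurableSet {ω | c ≤ |Y n ω|} := measurableSet_le measurable_const (hY n).abs
    calc ∫ ω, |Y n ω| ∂(P n)
        ≤ ∫ ω, ({ω | c ≤ |Y n ω|}.indicator (fun ω => |Y n ω|) ω + |c|) ∂(P n) := by
          refine integral_mono (hYi n).abs
            (((hYi n).abs.indicator hS).add (integrable_const _)) fun ω => ?_
          by_cases hω : c ≤ |Y n ω|
          · simp only [indicator_of_mem (show ω ∈ {ω | c ≤ |Y n ω|} from hω)]
            linarith [abs_nonneg c]
          · simp only [indicator_of_notMem (show ω ∉ {ω | c ≤ |Y n ω|} from hω)]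
            linarith [le_abs_self c]
      _ = ∫ ω in {ω | c ≤ |Y n ω|}, |Y n ω| ∂(P n) + |c| := by
          rw [integral_add ((hYi n).abs.indicator hS) (integrable_const _),
            integral_indicator hS]
          simp
      _ ≤ 1 + |c| := by linarith [hc n]
  have hK : ∀ m : ℕ, ∫ ω, |truncAt m (Y₀ ω)| ∂P₀ ≤ 1 + |c| := by
    intro m
    refine le_of_tendsto' (hlim m (Nat.cast_nonneg m)) fun n => (le_trans ?_ (hb n))
    refine integral_mono_of_nonneg (ae_of_all _ fun _ => abs_nonneg _) (hYi n).abs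
      (ae_of_all _ fun ω => abs_truncAt_le_abs (Nat.cast_nonneg m) _)
  refine ⟨hY₀.aestronglyMeasurable, ?_⟩
  have hT : ∀ m : ℕ, Measurable (fun ω => truncAt (m : ℝ) (Y₀ ω)) := fun m =>
    (truncAt_continuous _).measurable.comp hY₀
  have hbd : ∀ m : ℕ, ∫⁻ ω, ENNReal.ofReal |truncAt (m : ℝ) (Y₀ ω)| ∂P₀
      ≤ ENNReal.ofReal (1 + |c|) := by
    intro m
    rw [← ofReal_integral_eq_lintegral_ofReal _ (ae_of_all _ fun _ => abs_nonneg _)]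
    · exact ENNReal.ofReal_le_ofReal (hK m)
    · refine Integrable.of_bound (hT m).abs.aestronglyMeasurable (m : ℝ) (ae_of_all _ fun ω => ?_)
      simpa using abs_truncAt_le (Nat.cast_nonneg m) (Y₀ ω)
  rw [hasFiniteIntegral_iff_norm]
  refine lt_of_le_of_lt ?_ (ENNReal.ofReal_lt_top (r := 1 + |c|))
  calc ∫⁻ ω, ENNReal.ofReal ‖Y₀ ω‖ ∂P₀
      = ∫⁻ ω, liminf (fun m : ℕ => ENNReal.ofReal |truncAt (m : ℝ) (Y₀ ω)|) atTop ∂P₀ := by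
        refine lintegral_congr fun ω => ?_
        refine (Tendsto.liminf_eq (tendsto_const_nhds.congr' ?_)).symm
        obtain ⟨N, hN⟩ := exists_nat_ge |Y₀ ω|
        filter_upwards [eventually_ge_atTop N] with m hm
        rw [truncAt_eq (hN.trans (by exact_mod_cast hm)), Real.norm_eq_abs]
    _ ≤ liminf (fun m : ℕ => ∫⁻ ω, ENNReal.ofReal |truncAt (m : ℝ) (Y₀ ω)| ∂P₀) atTop :=
        lintegral_liminf_le fun m => (hT m).abs.ennreal_ofReal
    _ ≤ ENNReal.ofReal (1 + |c|) := by
        refine liminf_le_of_le ?_ fun b hb => ?_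
        · isBoundedDefault
        · obtain ⟨m, hm⟩ := hb.exists
          exact hm.trans (hbd m)

/-- Identification of a conditional expectation via finite-dimensional test functions. -/
lemma condExp_of_fdd {Ω T E : Type*} [mΩ : MeasurableSpace Ω] (P : Measure Ω)
    [IsProbabilityMeasure P]
    [TopologicalSpace E] [MeasurableSpace E] [BorelSpace E] [SecondCountableTopology E]
    [TopologicalSpace.PseudoMetrizableSpace E]
    (Z : T → Ω → E) (hZ : ∀ u, Measurable (Z u))
    (a b : Ω → ℝ) (ha : Measurable a) (hb : Measurable b)
    (hai : Integrable a P) (hbi : Integrable b P)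
    (hbF : StronglyMeasurable[⨆ u, MeasurableSpace.comap (Z u) inferInstance] b)
    (h : ∀ (I : Finset T) (g : BoundedContinuousFunction (I → E) ℝ),
      ∫ ω, g (fun u => Z u ω) * a ω ∂P = ∫ ω, g (fun u => Z u ω) * b ω ∂P) :
    P[a | ⨆ u, MeasurableSpace.comap (Z u) inferInstance] =ᵐ[P] b := by
  have hle : (⨆ u, MeasurableSpace.comap (Z u) inferInstance) ≤ mΩ :=
    iSup_le fun u => (hZ u).comap_le
  let Zp : Ω → (T → E) := fun ω u => Z u ω
  have hZp : Measurable Zp := measurable_pi_lambda _ hZ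
  let d₁ : Ω → ℝ≥0 := fun ω => (a ω).toNNReal + (-b ω).toNNReal
  let d₂ : Ω → ℝ≥0 := fun ω => (b ω).toNNReal + (-a ω).toNNReal
  have hd₁ : Measurable d₁ := ha.real_toNNReal.add hb.neg.real_toNNReal
  have hd₂ : Measurable d₂ := hb.real_toNNReal.add ha.neg.real_toNNReal
  have hi₁ : Integrable (fun ω => (d₁ ω : ℝ)) P := by
    have := hai.real_toNNReal.add hbi.neg.real_toNNReal
    refine this.congr (ae_of_all _ fun ω => ?_)
    simp [d₁]
  have hi₂ : Integrable (fun ω => (d₂ ω : ℝ)) P := by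
    have := hbi.real_toNNReal.add hai.neg.real_toNNReal
    refine this.congr (ae_of_all _ fun ω => ?_)
    simp [d₂]
  have hdiff : ∀ ω, (d₁ ω : ℝ) - d₂ ω = a ω - b ω := by
    intro ω
    simp only [d₁, d₂, NNReal.coe_add, Real.coe_toNNReal']
    have e1 : max (a ω) 0 - max (-a ω) 0 = a ω := max_zero_sub_eq_self _
    have e2 : max (b ω) 0 - max (-b ω) 0 = b ω := max_zero_sub_eq_self _
    linarith
  let ν₁ := P.withDensity (fun ω => (d₁ ω : ℝ≥0∞))
  let ν₂ := P.withDensity (fun ω => (d₂ ω : ℝ≥0∞))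
  have f₁ : IsFiniteMeasure ν₁ := by
    refine isFiniteMeasure_withDensity ?_
    have := hi₁.2
    rw [hasFiniteIntegral_iff_enorm] at this
    simpa using this.ne
  have f₂ : IsFiniteMeasure ν₂ := by
    refine isFiniteMeasure_withDensity ?_
    have := hi₂.2
    rw [hasFiniteIntegral_iff_enorm] at this
    simpa using this.ne
  have key : ν₁.map Zp = ν₂.map Zp := by
    refine IsProjectiveLimit.unique (P := fun I : Finset T => (ν₂.map Zp).map I.restrict)
      ?_ (fun I => rfl)
    intro I
    have hR : Measurable (I.restrict (π := fun _ : T => E)) := Finset.measurable_restrict I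
    change (ν₁.map Zp).map I.restrict = (ν₂.map Zp).map I.restrict
    rw [Measure.map_map hR hZp, Measure.map_map hR hZp]
    have : IsFiniteMeasure (ν₁.map (I.restrict ∘ Zp)) := inferInstance
    refine ext_of_forall_integral_eq_of_IsFiniteMeasure fun g => ?_
    have hm : Measurable (I.restrict ∘ Zp) := hR.comp hZp
    have hg : Measurable (fun ω => g (I.restrict (Zp ω))) := g.continuous.measurable.comp hm
    rw [integral_map hm.aemeasurable g.continuous.measurable.aestronglyMeasurable,
      integral_map hm.aemeasurable g.continuous.measurable.aestronglyMeasurable]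
    simp only [ν₁, ν₂]
    rw [integral_withDensity_eq_integral_smul hd₁, integral_withDensity_eq_integral_smul hd₂]
    have hgb : ∀ᵐ ω ∂P, ‖g (I.restrict (Zp ω))‖ ≤ ‖g‖ := ae_of_all _ fun ω => g.norm_coe_le_norm _
    have hI := h I g
    have j1 := hai.bdd_mul hg.aestronglyMeasurable hgb
    have j2 := hbi.bdd_mul hg.aestronglyMeasurable hgb
    have j3 := hi₁.bdd_mul hg.aestronglyMeasurable hgb
    have j4 := hi₂.bdd_mul hg.aestronglyMeasurable hgb
    have e : ∫ ω, g (I.restrict (Zp ω)) * a ω ∂P = ∫ ω, g (I.restrict (Zp ω)) * b ω ∂P := hI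
    rw [← sub_eq_zero, ← integral_sub j1 j2] at e
    have e' : ∫ ω, g (I.restrict (Zp ω)) * (d₁ ω : ℝ) ∂P
        = ∫ ω, g (I.restrict (Zp ω)) * (d₂ ω : ℝ) ∂P := by
      rw [← sub_eq_zero, ← integral_sub j3 j4, ← e]
      refine integral_congr_ae (ae_of_all _ fun ω => ?_)
      simp only
      rw [← mul_sub, hdiff, mul_sub]
    calc _ = ∫ ω, g (I.restrict (Zp ω)) * (d₁ ω : ℝ) ∂P := by
          refine integral_congr_ae (ae_of_all _ fun ω => ?_)
          simp [NNReal.smul_def, mul_comm]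
      _ = _ := e'
      _ = _ := by
          refine integral_congr_ae (ae_of_all _ fun ω => ?_)
          simp [NNReal.smul_def, mul_comm]
  symm
  refine ae_eq_condExp_of_forall_setIntegral_eq hle hai (fun _ _ _ => hbi.integrableOn) ?_
    hbF.aestronglyMeasurable
  intro A hA _
  have hA' : ∃ B : Set (T → E), MeasurableSet B ∧ Zp ⁻¹' B = A := by
    have : (⨆ u, MeasurableSpace.comap (Z u) inferInstance)
        = MeasurableSpace.comap Zp MeasurableSpace.pi := by
      simp only [MeasurableSpace.pi, MeasurableSpace.comap_iSup, MeasurableSpace.comap_comp]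
      rfl
    rw [this] at hA
    exact hA
  have hAm : MeasurableSet A := hle _ hA
  obtain ⟨B, hB, rfl⟩ := hA'
  have hν : ν₁ (Zp ⁻¹' B) = ν₂ (Zp ⁻¹' B) := by
    rw [← Measure.map_apply hZp hB, ← Measure.map_apply hZp hB, key]
  simp only [ν₁, ν₂] at hν
  rw [withDensity_apply _ hAm, withDensity_apply _ hAm] at hν
  have e : ∫ ω in Zp ⁻¹' B, (d₁ ω : ℝ) ∂P = ∫ ω in Zp ⁻¹' B, (d₂ ω : ℝ) ∂P := by
    rw [integral_eq_lintegral_of_nonneg_ae (ae_of_all _ fun _ => NNReal.coe_nonneg _)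
      hi₁.1.restrict, integral_eq_lintegral_of_nonneg_ae
      (ae_of_all _ fun _ => NNReal.coe_nonneg _) hi₂.1.restrict]
    simp only [ENNReal.ofReal_coe_nnreal]
    rw [hν]
  rw [← sub_eq_zero, ← integral_sub hi₁.integrableOn hi₂.integrableOn] at e
  symm
  rw [← sub_eq_zero, ← integral_sub hai.integrableOn hbi.integrableOn, ← e]
  exact integral_congr_ae (ae_of_all _ fun ω => (hdiff ω).symm)

/-- Preservation of the martingale property under uniform integrability
(continuous-path version): if `(X n, M n)` are random elements of the space of
continuous paths `C([0,∞), ℝ^k) × C([0,∞), ℝ)` (compact-open topology, i.e.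
uniform convergence on compacts), `M n` is a martingale with respect to the
filtration generated by `(X n, M n)`, the laws of `(X n, M n)` converge weakly
to the law of `(X₀, M₀)`, and for each `t` the family `{M n (t)}` is uniformly
integrable, then `M₀` is a martingale with respect to the filtration generated
by `(X₀, M₀)`. -/
theorem preservation_of_martingale_property_under_UI
    (k : ℕ)
    (Ω : ℕ → Type*) [∀ n, MeasurableSpace (Ω n)]
    (P : ∀ n, Measure (Ω n)) [∀ n, IsProbabilityMeasure (P n)]
    {Ω₀ : Type*} [MeasurableSpace Ω₀] (P₀ : Measure Ω₀) [IsProbabilityMeasure P₀]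
    (X : ∀ n, Ω n → C(ℝ≥0, Fin k → ℝ)) (M : ∀ n, Ω n → C(ℝ≥0, ℝ))
    (X₀ : Ω₀ → C(ℝ≥0, Fin k → ℝ)) (M₀ : Ω₀ → C(ℝ≥0, ℝ))
    (hmeas : ∀ n (t : ℝ≥0), Measurable (fun ω => (X n ω t, M n ω t)))
    (hmeas₀ : ∀ t : ℝ≥0, Measurable (fun ω => (X₀ ω t, M₀ ω t)))
    (hint : ∀ n (t : ℝ≥0), Integrable (fun ω => M n ω t) (P n))
    (hmart : ∀ n (s t : ℝ≥0), s ≤ t →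
      (P n)[fun ω => M n ω t |
          ⨆ u ∈ Iic s, MeasurableSpace.comap (fun ω => (X n ω u, M n ω u)) inferInstance]
        =ᵐ[P n] fun ω => M n ω s)
    (hconv : ∀ f : BoundedContinuousFunction (C(ℝ≥0, Fin k → ℝ) × C(ℝ≥0, ℝ)) ℝ,
      Tendsto (fun n => ∫ ω, f (X n ω, M n ω) ∂(P n)) atTop
        (𝓝 (∫ ω, f (X₀ ω, M₀ ω) ∂P₀)))
    (hUI : ∀ t : ℝ≥0, ∀ ε : ℝ, 0 < ε → ∃ c : ℝ, ∀ n,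
      ∫ ω in {ω | c ≤ |M n ω t|}, |M n ω t| ∂(P n) ≤ ε) :
    (∀ t : ℝ≥0, Integrable (fun ω => M₀ ω t) P₀)
    ∧ (∀ s t : ℝ≥0, s ≤ t →
        P₀[fun ω => M₀ ω t |
            ⨆ u ∈ Iic s, MeasurableSpace.comap (fun ω => (X₀ ω u, M₀ ω u)) inferInstance]
          =ᵐ[P₀] fun ω => M₀ ω s) := by
  have hMm : ∀ n t, Measurable (fun ω => M n ω t) := fun n t => (hmeas n t).snd
  have hMm₀ : ∀ t, Measurable (fun ω => M₀ ω t) := fun t => (hmeas₀ t).snd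
  have hI₀ : ∀ t : ℝ≥0, Integrable (fun ω => M₀ ω t) P₀ := by
    intro t
    refine integrable_limit Ω P P₀ (fun n ω => M n ω t) (fun ω => M₀ ω t) (fun n => hMm n t)
      (fun n => hint n t) (hMm₀ t) (hUI t) ?_
    intro K hK
    have hc : Continuous (fun p : C(ℝ≥0, Fin k → ℝ) × C(ℝ≥0, ℝ) => |truncAt K (p.2 t)|) :=
      ((truncAt_continuous K).comp
        ((continuous_eval_const t).comp continuous_snd)).abs
    exact hconv (BoundedContinuousFunction.ofNormedAddCommGroup _ hc K (fun p => by
      simpa using abs_truncAt_le hK (p.2 t)))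
  refine ⟨hI₀, fun s t hst => ?_⟩
  have hsup : (⨆ u ∈ Iic s, MeasurableSpace.comap (fun ω => (X₀ ω u, M₀ ω u)) inferInstance)
      = ⨆ u : Iic s, MeasurableSpace.comap (fun ω => (X₀ ω u, M₀ ω u)) inferInstance :=
    iSup_subtype'
  rw [hsup]
  have hbF : StronglyMeasurable[⨆ u : Iic s, MeasurableSpace.comap
      (fun ω => (X₀ ω u, M₀ ω u)) inferInstance] (fun ω => M₀ ω s) := by
    refine Measurable.stronglyMeasurable ?_
    have hm : Measurable[MeasurableSpace.comap (fun ω => (X₀ ω s, M₀ ω s)) inferInstance]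
        (fun ω => M₀ ω s) :=
      measurable_snd.comp (comap_measurable (fun ω => (X₀ ω s, M₀ ω s)))
    refine hm.mono ?_ le_rfl
    exact le_iSup (fun u : Iic s => MeasurableSpace.comap
      (fun ω => (X₀ ω u, M₀ ω u)) inferInstance) ⟨s, Set.self_mem_Iic⟩
  refine condExp_of_fdd P₀ (fun (u : Iic s) ω => (X₀ ω u, M₀ ω u)) (fun u => hmeas₀ u)
    _ _ (hMm₀ t) (hMm₀ s) (hI₀ t) (hI₀ s) hbF ?_
  intro I g
  have hGm : ∀ n, Measurable (fun ω => g (fun u => (X n ω u, M n ω u))) := fun n =>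
    g.continuous.measurable.comp (measurable_pi_lambda _ fun u => hmeas n u)
  have hGm₀ : Measurable (fun ω => g (fun u => (X₀ ω u, M₀ ω u))) :=
    g.continuous.measurable.comp (measurable_pi_lambda _ fun u => hmeas₀ u)
  have hL : ∀ r : ℝ≥0, Tendsto
      (fun n => ∫ ω, g (fun u => (X n ω u, M n ω u)) * M n ω r ∂(P n)) atTop
      (𝓝 (∫ ω, g (fun u => (X₀ ω u, M₀ ω u)) * M₀ ω r ∂P₀)) := by
    intro r
    refine tendsto_of_trunc Ω P P₀ (fun n ω => M n ω r)
      (fun n ω => g (fun u => (X n ω u, M n ω u))) (fun ω => M₀ ω r)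
      (fun ω => g (fun u => (X₀ ω u, M₀ ω u))) (fun n => hMm n r) (fun n => hint n r) hGm
      (hMm₀ r) (hI₀ r) hGm₀ ‖g‖ (norm_nonneg _) (fun n ω => g.norm_coe_le_norm _)
      (fun ω => g.norm_coe_le_norm _) (hUI r) ?_
    intro K hK
    have hc : Continuous (fun p : C(ℝ≥0, Fin k → ℝ) × C(ℝ≥0, ℝ) =>
        g (fun u => (p.1 u, p.2 u)) * truncAt K (p.2 r)) := by
      refine Continuous.mul (g.continuous.comp (continuous_pi fun u => ?_))
        ((truncAt_continuous K).comp
          ((continuous_eval_const r).comp continuous_snd))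
      exact ((continuous_eval_const (u : ℝ≥0)).comp continuous_fst).prodMk
        ((continuous_eval_const (u : ℝ≥0)).comp continuous_snd)
    exact hconv (BoundedContinuousFunction.ofNormedAddCommGroup _ hc (‖g‖ * K) (fun p => by
      rw [norm_mul]
      exact mul_le_mul (g.norm_coe_le_norm _) (abs_truncAt_le hK _) (norm_nonneg _)
        (norm_nonneg _)))
  refine tendsto_nhds_unique (hL t) ((hL s).congr fun n => ?_)
  -- the martingale property of `M n`, tested against a bounded measurable function of the past
  have hle : (⨆ u ∈ Iic s, MeasurableSpace.comap (fun ω => (X n ω u, M n ω u)) inferInstance)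
      ≤ (inferInstance : MeasurableSpace (Ω n)) :=
    iSup₂_le fun u _ => (hmeas n u).comap_le
  have hGF : StronglyMeasurable[⨆ u ∈ Iic s, MeasurableSpace.comap
      (fun ω => (X n ω u, M n ω u)) inferInstance]
      (fun ω => g (fun u => (X n ω u, M n ω u))) := by
    refine Measurable.stronglyMeasurable ?_
    refine Measurable.comp g.continuous.measurable ?_
    refine @measurable_pi_lambda _ _ _ (_) _ _ fun u => ?_
    have hm : Measurable[MeasurableSpace.comap (fun ω => (X n ω u, M n ω u)) inferInstance]
        (fun ω => (X n ω u, M n ω u)) := comap_measurable _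
    refine hm.mono ?_ le_rfl
    exact le_iSup₂ (f := fun (u : ℝ≥0) (_ : u ∈ Iic s) => MeasurableSpace.comap
      (fun ω => (X n ω u, M n ω u)) inferInstance) (u : ℝ≥0) u.1.2
  have hgi : Integrable (fun ω => g (fun u => (X n ω u, M n ω u)) * M n ω t) (P n) :=
    (hint n t).bdd_mul (hGm n).aestronglyMeasurable
      (ae_of_all _ fun ω => g.norm_coe_le_norm _)
  have hpull := condExp_mul_of_stronglyMeasurable_left (μ := P n) hGF
    (g := fun ω => M n ω t) hgi (hint n t)
  have e := integral_condExp (μ := P n) hle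
    (f := (fun ω => g (fun u => (X n ω u, M n ω u))) * fun ω => M n ω t)
  refine Eq.trans ?_ e
  refine integral_congr_ae ?_
  filter_upwards [hpull, hmart n s t hst] with ω h1 h2
  rw [h1, Pi.mul_apply, h2]
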